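/- arXiv:1008.3097 — 3 statements merged into one kernel-verified Lean document; each statement's English description precedes it below -/
import Mathlib

section
/- For every ε ∈ (0,1), the function γ : (0, 4π] → ℝ is continuous. In particular, the two defining formulas agree at the junction point z = 4π/(3−2ε), where y(z) = z^{3/2} and both formulas give γ(z) = ∫₀^{z^{3/2}} (9εz − 9ε x^{2/3})^{−1/2} dx. -/
open Real MeasureTheory Set Filter

/-- `y(z) = z^{1/2}(4π − z)/(2(1−ε))`. -/
noncomputable def yFn (ε z : ℝ) : ℝ := z ^ (1/2 : ℝ) * (4 * π - z) / (2 * (1 - ε))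

/-- The comparison function `γ` from the proof of the equality case of Bray's
volume comparison theorem. -/
noncomputable def gammaFn (ε z : ℝ) : ℝ :=
  if z ≤ 4 * π / (3 - 2 * ε) then
    ∫ x in (0:ℝ)..(z ^ (3/2 : ℝ)), (9 * ε * z - 9 * ε * x ^ (2/3 : ℝ)) ^ (-(1/2) : ℝ)
  else
    (∫ x in (0:ℝ)..(yFn ε z),
        (36 * π - 27 * (1 - ε) * (yFn ε z) ^ (2/3 : ℝ) - 9 * ε * x ^ (2/3 : ℝ)) ^ (-(1/2) : ℝ)) +
    (∫ x in (yFn ε z)..(z ^ (3/2 : ℝ)),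
        (36 * π - 18 * (1 - ε) * (yFn ε z) * x ^ (-(1/3) : ℝ) - 9 * x ^ (2/3 : ℝ)) ^ (-(1/2) : ℝ))

/-!
Every integrand is the power `-1/2` of a radicand that may vanish at the upper endpoint `b` of its
interval, and every radicand is at least `9ε (b^{2/3} - x^{2/3})`. By concavity of `x ↦ x^{2/3}`
this is at least a constant times `b - x`, so the singularity at `b` is integrable. Once rescaled
to the fixed interval `(0, 1)`, with `b` moved to `0`, the integrands are dominated by a multiple of
`t^{-1/2}`, even near those `z` for which the original interval shrinks to a point, and dominated
convergence applies.
-/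

section ParametricIntegral

open scoped Topology

variable {E : Type*} [NormedAddCommGroup E] [NormedSpace ℝ E]

theorem intervalIntegral_eq_setIntegral_Ioo_zero_one (f : ℝ → E) (a b : ℝ) :
    ∫ x in a..b, f x = ∫ t in Ioo (0 : ℝ) 1, (b - a) • f (b - (b - a) * t) := by
  rw [← integral_Ioc_eq_integral_Ioo, ← intervalIntegral.integral_of_le zero_le_one,
    intervalIntegral.integral_smul, intervalIntegral.smul_integral_comp_sub_mul]
  simp only [mul_one, mul_zero, sub_sub_cancel, sub_zero]

theorem sub_mul_mem_Ioo {a b t : ℝ} (hab : a < b) (ht : t ∈ Ioo (0 : ℝ) 1) :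
    b - (b - a) * t ∈ Ioo a b := by
  have hba : 0 < b - a := sub_pos.2 hab
  constructor
  · linarith [mul_lt_of_lt_one_right hba ht.2]
  · linarith [mul_pos hba ht.1]

theorem norm_sub_smul_le_of_norm_le_rpow {f : ℝ → E} {a b C r t : ℝ} (hr : -1 < r) (hab : a ≤ b)
    (hf : ∀ x ∈ Ioo a b, ‖f x‖ ≤ C * (b - x) ^ r) (ht : t ∈ Ioo (0 : ℝ) 1) :
    ‖(b - a) • f (b - (b - a) * t)‖ ≤ C * (b - a) ^ (1 + r) * t ^ r := by
  rcases hab.eq_or_lt with rfl | hlt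
  · simp [zero_rpow (by linarith : 1 + r ≠ 0)]
  have hba : 0 < b - a := sub_pos.2 hlt
  calc ‖(b - a) • f (b - (b - a) * t)‖
      = (b - a) * ‖f (b - (b - a) * t)‖ := by rw [norm_smul, norm_of_nonneg hba.le]
    _ ≤ (b - a) * (C * (b - (b - (b - a) * t)) ^ r) := by
      gcongr
      exact hf _ (sub_mul_mem_Ioo hlt ht)
    _ = C * (b - a) ^ (1 + r) * t ^ r := by
      rw [sub_sub_cancel, mul_rpow hba.le ht.1.le, rpow_add hba, rpow_one]
      ring

variable {X : Type*} [TopologicalSpace X] {S : Set X} {a b : X → ℝ} {r : ℝ}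

theorem continuousWithinAt_rescaled_of_norm_le_rpow {f : X → ℝ → E} {C : X → ℝ} {z : X} {t : ℝ}
    (hr : -1 < r) (ha : ContinuousOn a S) (hb : ContinuousOn b S) (hC : ContinuousOn C S)
    (hab : ∀ z ∈ S, a z ≤ b z) (hf : ContinuousOn (Function.uncurry f) (regionBetween a b S))
    (hbound : ∀ z ∈ S, ∀ x ∈ Ioo (a z) (b z), ‖f z x‖ ≤ C z * (b z - x) ^ r)
    (hz : z ∈ S) (ht : t ∈ Ioo (0 : ℝ) 1) :
    ContinuousWithinAt (fun w => (b w - a w) • f w (b w - (b w - a w) * t)) S z := by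
  have hba : ContinuousWithinAt (fun w => b w - a w) S z := (hb z hz).sub (ha z hz)
  rcases (hab z hz).eq_or_lt with heq | hlt
  · have hsmall : Tendsto (fun w => C w * (b w - a w) ^ (1 + r) * t ^ r) (𝓝[S] z) (𝓝 0) := by
      have h := ((hC z hz).mul (hba.rpow_const (p := 1 + r) (Or.inr (by linarith)))).mul_const
        (t ^ r)
      simpa [ContinuousWithinAt, heq, zero_rpow (by linarith : 1 + r ≠ 0)] using h
    simp only [ContinuousWithinAt, heq, sub_self, zero_smul]
    refine squeeze_zero_norm' ?_ hsmall
    filter_upwards [self_mem_nhdsWithin] with w hw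
    exact norm_sub_smul_le_of_norm_le_rpow hr (hab w hw) (hbound w hw) ht
  · have hmem : ∀ᶠ w in 𝓝[S] z, (w, b w - (b w - a w) * t) ∈ regionBetween a b S := by
      filter_upwards [self_mem_nhdsWithin, (ha z hz).eventually_lt (hb z hz) hlt] with w hw hwlt
      exact ⟨hw, sub_mul_mem_Ioo hwlt ht⟩
    have hpath : ContinuousWithinAt (fun w => (w, b w - (b w - a w) * t)) S z :=
      continuousWithinAt_id.prodMk ((hb z hz).sub (hba.mul_const t))
    exact hba.smul ((hf _ ⟨hz, sub_mul_mem_Ioo hlt ht⟩).tendsto.comp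
      (tendsto_nhdsWithin_iff.2 ⟨hpath, hmem⟩))

theorem aestronglyMeasurable_rescaled {f : ℝ → E} {a b : ℝ} (hab : a ≤ b)
    (hf : ContinuousOn f (Ioo a b)) :
    AEStronglyMeasurable (fun t => (b - a) • f (b - (b - a) * t))
      (volume.restrict (Ioo (0 : ℝ) 1)) := by
  rcases hab.eq_or_lt with rfl | hlt
  · simp only [sub_self, zero_smul]
    exact aestronglyMeasurable_const
  · refine ContinuousOn.aestronglyMeasurable ?_ measurableSet_Ioo
    exact (hf.comp (by fun_prop) fun t ht => sub_mul_mem_Ioo hlt ht).const_smul _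

theorem continuousOn_intervalIntegral_of_norm_le_rpow [FirstCountableTopology X]
    {f : X → ℝ → E} {C : X → ℝ} (hr : -1 < r)
    (ha : ContinuousOn a S) (hb : ContinuousOn b S) (hC : ContinuousOn C S)
    (hab : ∀ z ∈ S, a z ≤ b z) (hf : ContinuousOn (Function.uncurry f) (regionBetween a b S))
    (hbound : ∀ z ∈ S, ∀ x ∈ Ioo (a z) (b z), ‖f z x‖ ≤ C z * (b z - x) ^ r) :
    ContinuousOn (fun z => ∫ x in a z..b z, f z x) S := by
  simp only [intervalIntegral_eq_setIntegral_Ioo_zero_one]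
  intro z hz
  set K : X → ℝ := fun w => C w * (b w - a w) ^ (1 + r)
  have hK : ContinuousWithinAt K S z :=
    (hC z hz).mul (((hb z hz).sub (ha z hz)).rpow_const (Or.inr (by linarith)))
  refine continuousWithinAt_of_dominated (bound := fun t => (K z + 1) * t ^ r) ?_ ?_ ?_ ?_
  · filter_upwards [self_mem_nhdsWithin] with w hw
    refine aestronglyMeasurable_rescaled (hab w hw) ?_
    exact hf.comp (f := Prod.mk w) (by fun_prop) fun x hx => ⟨hw, hx⟩
  · filter_upwards [self_mem_nhdsWithin, hK.eventually_le_const (lt_add_one (K z))] with w hw hKw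
    filter_upwards [ae_restrict_mem measurableSet_Ioo] with t ht
    exact (norm_sub_smul_le_of_norm_le_rpow hr (hab w hw) (hbound w hw) ht).trans
      (mul_le_mul_of_nonneg_right hKw (rpow_nonneg ht.1.le r))
  · have hint :=
      (intervalIntegral.intervalIntegrable_rpow' (a := 0) (b := 1) hr).const_mul (K z + 1)
    exact (intervalIntegrable_iff_integrableOn_Ioo_of_le zero_le_one).1 hint
  · filter_upwards [ae_restrict_mem measurableSet_Ioo] with t ht
    exact continuousWithinAt_rescaled_of_norm_le_rpow hr ha hb hC hab hf hbound hz ht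

theorem continuousOn_intervalIntegral_rpow_of_linear_le [FirstCountableTopology X]
    {h : X → ℝ → ℝ} {m : X → ℝ} (hr : -1 < r) (hr₀ : r ≤ 0)
    (ha : ContinuousOn a S) (hb : ContinuousOn b S) (hm : ContinuousOn m S)
    (hm₀ : ∀ z ∈ S, 0 < m z) (hab : ∀ z ∈ S, a z ≤ b z)
    (hh : ContinuousOn (Function.uncurry h) (regionBetween a b S))
    (hle : ∀ z ∈ S, ∀ x ∈ Ioo (a z) (b z), m z * (b z - x) ≤ h z x) :
    ContinuousOn (fun z => ∫ x in a z..b z, h z x ^ r) S := by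
  have hlow_pos : ∀ z ∈ S, ∀ x ∈ Ioo (a z) (b z), 0 < m z * (b z - x) := fun z hz x hx =>
    mul_pos (hm₀ z hz) (sub_pos.2 hx.2)
  refine continuousOn_intervalIntegral_of_norm_le_rpow (C := fun z => m z ^ r) hr ha hb
    (hm.rpow_const fun z hz => Or.inl (hm₀ z hz).ne') hab
    (hh.rpow_const fun p hp => Or.inl ((hlow_pos _ hp.1 _ hp.2).trans_le (hle _ hp.1 _ hp.2)).ne')
    fun z hz x hx => ?_
  have hlow := hlow_pos z hz x hx
  calc ‖h z x ^ r‖ = h z x ^ r :=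
        norm_of_nonneg (rpow_nonneg (hlow.le.trans (hle z hz x hx)) r)
    _ ≤ (m z * (b z - x)) ^ r := rpow_le_rpow_of_nonpos hlow (hle z hz x hx) hr₀
    _ = m z ^ r * (b z - x) ^ r := mul_rpow (hm₀ z hz).le (sub_pos.2 hx.2).le

theorem mul_rpow_sub_one_mul_sub_le_rpow_sub_rpow {p x y : ℝ} (hp₀ : 0 ≤ p) (hp₁ : p ≤ 1)
    (hx : 0 ≤ x) (hy : 0 < y) : p * y ^ (p - 1) * (y - x) ≤ y ^ p - x ^ p := by
  have bernoulli : (x / y) ^ p ≤ 1 + p * (x / y - 1) := by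
    have hs : -1 ≤ x / y - 1 := by linarith [div_nonneg hx hy.le]
    simpa using rpow_one_add_le_one_add_mul_self hs hp₀ hp₁
  rw [div_rpow hx hy.le, div_le_iff₀ (rpow_pos_of_pos hy p)] at bernoulli
  have tangent : (1 + p * (x / y - 1)) * y ^ p = y ^ p - p * y ^ (p - 1) * (y - x) := by
    rw [rpow_sub_one hy.ne']
    field_simp
    ring
  linarith

theorem continuousOn_intervalIntegral_rpow_of_rpow_sub_rpow_le [FirstCountableTopology X]
    {h : X → ℝ → ℝ} {k p : ℝ} (hr : -1 < r) (hr₀ : r ≤ 0)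
    (hk : 0 < k) (hp₀ : 0 < p) (hp₁ : p ≤ 1)
    (ha : ContinuousOn a S) (hb : ContinuousOn b S)
    (ha₀ : ∀ z ∈ S, 0 ≤ a z) (hab : ∀ z ∈ S, a z ≤ b z)
    (hh : ContinuousOn (Function.uncurry h) (regionBetween a b S))
    (hle : ∀ z ∈ S, ∀ x ∈ Ioo (a z) (b z), k * (b z ^ p - x ^ p) ≤ h z x) :
    ContinuousOn (fun z => ∫ x in a z..b z, h z x ^ r) S := by
  have hb_pos : ∀ z ∈ S, 0 < b z + 1 := fun z hz => by linarith [ha₀ z hz, hab z hz]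
  -- The slope `p * b ^ (p - 1)` may blow up where `b` vanishes; the shift keeps it continuous.
  refine continuousOn_intervalIntegral_rpow_of_linear_le
    (m := fun z => k * (p * (b z + 1) ^ (p - 1))) hr hr₀ ha hb ?_ ?_ hab hh fun z hz x hx => ?_
  · exact continuousOn_const.mul (continuousOn_const.mul
      ((hb.add_const 1).rpow_const fun z hz => Or.inl (hb_pos z hz).ne'))
  · intro z hz
    have := hb_pos z hz
    positivity
  have hx₀ : 0 < x := (ha₀ z hz).trans_lt hx.1
  have hbz : 0 < b z := hx₀.trans hx.2
  have hbx : 0 ≤ b z - x := (sub_pos.2 hx.2).le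
  have hslope : (b z + 1) ^ (p - 1) ≤ b z ^ (p - 1) :=
    rpow_le_rpow_of_nonpos hbz (by linarith) (by linarith)
  calc k * (p * (b z + 1) ^ (p - 1)) * (b z - x)
      ≤ k * (p * b z ^ (p - 1)) * (b z - x) := by gcongr
    _ = k * (p * b z ^ (p - 1) * (b z - x)) := mul_assoc _ _ _
    _ ≤ k * (b z ^ p - x ^ p) := by
      gcongr
      exact mul_rpow_sub_one_mul_sub_le_rpow_sub_rpow hp₀.le hp₁ hx₀.le hbz
    _ ≤ h z x := hle z hz x hx

end ParametricIntegral

/-- The value of `z` at which the two formulas defining `γ` meet. -/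
noncomputable def gammaJunction (ε : ℝ) : ℝ := 4 * π / (3 - 2 * ε)

/-- The expression raised to the power `-1/2` in the integral of `γ` over `[0, y(z)]`. -/
noncomputable def innerRadicand (ε z x : ℝ) : ℝ :=
  36 * π - 27 * (1 - ε) * (yFn ε z) ^ (2 / 3 : ℝ) - 9 * ε * x ^ (2 / 3 : ℝ)

/-- The expression raised to the power `-1/2` in the integral of `γ` over `[y(z), z^{3/2}]`. -/
noncomputable def outerRadicand (ε z x : ℝ) : ℝ :=
  36 * π - 18 * (1 - ε) * (yFn ε z) * x ^ (-(1 / 3) : ℝ) - 9 * x ^ (2 / 3 : ℝ)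

/-- The formula for `γ` below the junction. -/
noncomputable def gammaLower (ε z : ℝ) : ℝ :=
  ∫ x in (0 : ℝ)..(z ^ (3 / 2 : ℝ)), (9 * ε * z - 9 * ε * x ^ (2 / 3 : ℝ)) ^ (-(1 / 2) : ℝ)

/-- The formula for `γ` above the junction. -/
noncomputable def gammaUpper (ε z : ℝ) : ℝ :=
  (∫ x in (0 : ℝ)..(yFn ε z), innerRadicand ε z x ^ (-(1 / 2) : ℝ)) +
    ∫ x in (yFn ε z)..(z ^ (3 / 2 : ℝ)), outerRadicand ε z x ^ (-(1 / 2) : ℝ)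

theorem rpow_three_halves_rpow_two_thirds {z : ℝ} (hz : 0 ≤ z) :
    (z ^ (3 / 2 : ℝ)) ^ (2 / 3 : ℝ) = z := by
  rw [← rpow_mul hz]
  norm_num

section Comparison

variable {ε z x : ℝ}

theorem gammaJunction_pos (hε : ε < 1) : 0 < gammaJunction ε :=
  div_pos (by positivity) (by linarith)

theorem continuous_yFn (ε : ℝ) : Continuous (yFn ε) := by
  have hsqrt : Continuous fun z : ℝ => z ^ (1 / 2 : ℝ) := continuous_rpow_const (by norm_num)
  unfold yFn
  fun_prop

theorem yFn_nonneg (hε : ε < 1) (hz₀ : 0 ≤ z) (hz : z ≤ 4 * π) : 0 ≤ yFn ε z :=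
  div_nonneg (mul_nonneg (rpow_nonneg hz₀ _) (sub_nonneg.2 hz)) (by linarith)

theorem yFn_le_rpow_three_halves (hε : ε < 1) (hz : gammaJunction ε ≤ z) :
    yFn ε z ≤ z ^ (3 / 2 : ℝ) := by
  have hz₀ : 0 < z := (gammaJunction_pos hε).trans_le hz
  rw [gammaJunction, div_le_iff₀ (by linarith)] at hz
  rw [yFn, div_le_iff₀ (by linarith), show (3 / 2 : ℝ) = 1 / 2 + 1 by norm_num,
    rpow_add_one hz₀.ne', mul_assoc]
  gcongr
  linarith

theorem yFn_gammaJunction (hε : ε < 1) :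
    yFn ε (gammaJunction ε) = gammaJunction ε ^ (3 / 2 : ℝ) := by
  have hlin : 4 * π - gammaJunction ε = 2 * (1 - ε) * gammaJunction ε := by
    have hd : 3 - 2 * ε ≠ 0 := by linarith
    unfold gammaJunction
    field_simp
    ring
  have hc : 1 - ε ≠ 0 := by linarith
  rw [yFn, hlin, show (3 / 2 : ℝ) = 1 / 2 + 1 by norm_num,
    rpow_add_one (gammaJunction_pos hε).ne']
  field_simp

theorem gammaUpper_gammaJunction (hε : ε < 1) :
    gammaUpper ε (gammaJunction ε) = gammaLower ε (gammaJunction ε) := by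
  have hmul : gammaJunction ε * (3 - 2 * ε) = 4 * π := div_mul_cancel₀ _ (by linarith)
  have hrad (x : ℝ) : innerRadicand ε (gammaJunction ε) x =
      9 * ε * gammaJunction ε - 9 * ε * x ^ (2 / 3 : ℝ) := by
    rw [innerRadicand, yFn_gammaJunction hε,
      rpow_three_halves_rpow_two_thirds (gammaJunction_pos hε).le]
    linear_combination (-9) * hmul
  simp only [gammaUpper, gammaLower, hrad, yFn_gammaJunction hε, intervalIntegral.integral_same,
    add_zero]

theorem thirty_six_mul_pi_eq (hε : ε < 1) (hz : 0 < z) :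
    36 * π = 9 * z + 18 * (1 - ε) * yFn ε z * z ^ (-(1 / 2) : ℝ) := by
  have hc : 1 - ε ≠ 0 := by linarith
  rw [yFn, rpow_neg hz.le]
  field_simp
  ring

-- Since `y(z) ≤ x`, replacing `y(z)` by `x` only lowers the radicand; the tangent to `x ^ (2/3)` at
-- `z ^ (3/2)` then bounds the subtracted term by `9 * (1 - ε) * (z - x ^ (2/3))`.
theorem mul_sub_le_outerRadicand (hε : ε < 1) (hz : 0 < z) (hx : 0 < x) (hyx : yFn ε z ≤ x)
    (hxz : x ≤ z ^ (3 / 2 : ℝ)) :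
    9 * ε * ((z ^ (3 / 2 : ℝ)) ^ (2 / 3 : ℝ) - x ^ (2 / 3 : ℝ)) ≤ outerRadicand ε z x := by
  rw [rpow_three_halves_rpow_two_thirds hz.le]
  set s := z ^ (-(1 / 2) : ℝ)
  set v := x ^ (-(1 / 3) : ℝ)
  have hxv : x * v = x ^ (2 / 3 : ℝ) := by
    rw [mul_comm, ← rpow_add_one hx.ne']
    norm_num
  have hslope : (z ^ (3 / 2 : ℝ)) ^ (2 / 3 - 1 : ℝ) = s := by
    rw [← rpow_mul hz.le]
    norm_num [s]
  have hsz : s * z ^ (3 / 2 : ℝ) = z := by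
    rw [← rpow_add hz]
    norm_num
  have tangent : 2 / 3 * s * (z ^ (3 / 2 : ℝ) - x) ≤ z - x ^ (2 / 3 : ℝ) := by
    simpa only [hslope, rpow_three_halves_rpow_two_thirds hz.le] using
      mul_rpow_sub_one_mul_sub_le_rpow_sub_rpow (p := 2 / 3) (by norm_num) (by norm_num) hx.le
        (rpow_pos_of_pos hz (3 / 2))
  have hsv : s ≤ v := by
    rw [← hslope]
    norm_num only
    exact rpow_le_rpow_of_nonpos hx hxz (by norm_num)
  have hcorrection : 2 * (x * (v - s)) ≤ z - x ^ (2 / 3 : ℝ) := by linarith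
  have hc : 0 ≤ 1 - ε := by linarith
  calc 9 * ε * (z - x ^ (2 / 3 : ℝ))
      ≤ 9 * (z - x ^ (2 / 3 : ℝ)) - 18 * (1 - ε) * (x * (v - s)) := by
        linarith [mul_le_mul_of_nonneg_left hcorrection hc]
    _ ≤ 9 * (z - x ^ (2 / 3 : ℝ)) - 18 * (1 - ε) * (yFn ε z * (v - s)) := by gcongr
    _ = outerRadicand ε z x := by
      rw [outerRadicand, thirty_six_mul_pi_eq hε hz]
      ring

-- The two radicands agree at `x = y(z)`, where the outer one has just been shown nonnegative.
theorem mul_sub_le_innerRadicand (hε₀ : 0 ≤ ε) (hε : ε < 1) (hz : 0 < z) (hy : 0 < yFn ε z)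
    (hyz : yFn ε z ≤ z ^ (3 / 2 : ℝ)) :
    9 * ε * (yFn ε z ^ (2 / 3 : ℝ) - x ^ (2 / 3 : ℝ)) ≤ innerRadicand ε z x := by
  have hyv : yFn ε z * yFn ε z ^ (-(1 / 3) : ℝ) = yFn ε z ^ (2 / 3 : ℝ) := by
    rw [mul_comm, ← rpow_add_one hy.ne']
    norm_num
  have houter : 0 ≤ outerRadicand ε z (yFn ε z) :=
    (mul_nonneg (by positivity) (sub_nonneg.2 (by gcongr))).trans
      (mul_sub_le_outerRadicand hε hz hy le_rfl hyz)
  rw [outerRadicand, mul_assoc (18 * (1 - ε)), hyv] at houter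
  rw [innerRadicand]
  linarith

theorem continuousOn_gammaLower (hε : 0 < ε) : ContinuousOn (gammaLower ε) (Ici 0) := by
  have hb : Continuous fun z : ℝ => z ^ (3 / 2 : ℝ) := continuous_rpow_const (by norm_num)
  refine continuousOn_intervalIntegral_rpow_of_rpow_sub_rpow_le (k := 9 * ε) (p := 2 / 3)
    (h := fun z x => 9 * ε * z - 9 * ε * x ^ (2 / 3 : ℝ)) (by norm_num) (by norm_num)
    (by positivity) (by norm_num) (by norm_num) continuousOn_const hb.continuousOn
    (fun _ _ => le_rfl) (fun z hz => rpow_nonneg hz _) ?_ fun z hz x _ => ?_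
  · have hpow : Continuous fun x : ℝ => x ^ (2 / 3 : ℝ) := continuous_rpow_const (by norm_num)
    exact Continuous.continuousOn (by fun_prop)
  · rw [rpow_three_halves_rpow_two_thirds hz, mul_sub]

theorem continuousOn_integral_innerRadicand (hε₀ : 0 < ε) (hε : ε < 1) :
    ContinuousOn (fun z => ∫ x in (0 : ℝ)..(yFn ε z), innerRadicand ε z x ^ (-(1 / 2) : ℝ))
      (Icc (gammaJunction ε) (4 * π)) := by
  have hpos : ∀ z ∈ Icc (gammaJunction ε) (4 * π), 0 < z := fun z hz =>
    (gammaJunction_pos hε).trans_le hz.1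
  have hy := continuous_yFn ε
  refine continuousOn_intervalIntegral_rpow_of_rpow_sub_rpow_le (k := 9 * ε) (p := 2 / 3)
    (by norm_num) (by norm_num) (by positivity) (by norm_num) (by norm_num) continuousOn_const
    hy.continuousOn (fun _ _ => le_rfl) (fun z hz => yFn_nonneg hε (hpos z hz).le hz.2) ?_
    fun z hz x hx => mul_sub_le_innerRadicand hε₀.le hε (hpos z hz) (hx.1.trans hx.2)
      (yFn_le_rpow_three_halves hε hz.1)
  have hpow : Continuous fun x : ℝ => x ^ (2 / 3 : ℝ) := continuous_rpow_const (by norm_num)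
  unfold innerRadicand
  exact Continuous.continuousOn (by fun_prop)

theorem continuousOn_integral_outerRadicand (hε₀ : 0 < ε) (hε : ε < 1) :
    ContinuousOn
      (fun z => ∫ x in (yFn ε z)..(z ^ (3 / 2 : ℝ)), outerRadicand ε z x ^ (-(1 / 2) : ℝ))
      (Icc (gammaJunction ε) (4 * π)) := by
  have hpos : ∀ z ∈ Icc (gammaJunction ε) (4 * π), 0 < z := fun z hz =>
    (gammaJunction_pos hε).trans_le hz.1
  have hy₀ : ∀ z ∈ Icc (gammaJunction ε) (4 * π), 0 ≤ yFn ε z := fun z hz =>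
    yFn_nonneg hε (hpos z hz).le hz.2
  have hy := continuous_yFn ε
  have hb : Continuous fun z : ℝ => z ^ (3 / 2 : ℝ) := continuous_rpow_const (by norm_num)
  refine continuousOn_intervalIntegral_rpow_of_rpow_sub_rpow_le (k := 9 * ε) (p := 2 / 3)
    (by norm_num) (by norm_num) (by positivity) (by norm_num) (by norm_num) hy.continuousOn
    hb.continuousOn hy₀ (fun z hz => yFn_le_rpow_three_halves hε hz.1) ?_
    fun z hz x hx => mul_sub_le_outerRadicand hε (hpos z hz) ((hy₀ z hz).trans_lt hx.1)
      hx.1.le hx.2.le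
  have hpow : Continuous fun x : ℝ => x ^ (2 / 3 : ℝ) := continuous_rpow_const (by norm_num)
  have hneg : ContinuousOn (fun q : ℝ × ℝ => q.2 ^ (-(1 / 3) : ℝ))
      (regionBetween (yFn ε) (fun z => z ^ (3 / 2 : ℝ)) (Icc (gammaJunction ε) (4 * π))) :=
    continuousOn_snd.rpow_const fun q hq => Or.inl ((hy₀ _ hq.1).trans_lt hq.2.1).ne'
  unfold outerRadicand Function.uncurry
  fun_prop

theorem continuousOn_gammaUpper (hε₀ : 0 < ε) (hε : ε < 1) :
    ContinuousOn (gammaUpper ε) (Icc (gammaJunction ε) (4 * π)) :=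
  (continuousOn_integral_innerRadicand hε₀ hε).add (continuousOn_integral_outerRadicand hε₀ hε)

end Comparison

/-- For every `ε ∈ (0,1)`, the function `γ` is continuous on `(0, 4π]`.  In particular, at the
junction point `z = 4π/(3−2ε)` one has `y(z) = z^{3/2}` and the two defining formulas agree,
both giving `∫₀^{z^{3/2}} (9εz − 9εx^{2/3})^{−1/2} dx`. -/
theorem stmt_3 (ε : ℝ) (hε : ε ∈ Set.Ioo (0:ℝ) 1) :
    yFn ε (4 * π / (3 - 2 * ε)) = (4 * π / (3 - 2 * ε)) ^ (3/2 : ℝ) ∧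
    ((∫ x in (0:ℝ)..(yFn ε (4 * π / (3 - 2 * ε))),
        (36 * π - 27 * (1 - ε) * (yFn ε (4 * π / (3 - 2 * ε))) ^ (2/3 : ℝ)
          - 9 * ε * x ^ (2/3 : ℝ)) ^ (-(1/2) : ℝ)) +
      (∫ x in (yFn ε (4 * π / (3 - 2 * ε)))..((4 * π / (3 - 2 * ε)) ^ (3/2 : ℝ)),
        (36 * π - 18 * (1 - ε) * (yFn ε (4 * π / (3 - 2 * ε))) * x ^ (-(1/3) : ℝ)
          - 9 * x ^ (2/3 : ℝ)) ^ (-(1/2) : ℝ))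
      = ∫ x in (0:ℝ)..((4 * π / (3 - 2 * ε)) ^ (3/2 : ℝ)),
          (9 * ε * (4 * π / (3 - 2 * ε)) - 9 * ε * x ^ (2/3 : ℝ)) ^ (-(1/2) : ℝ)) ∧
    ContinuousOn (gammaFn ε) (Set.Ioc (0:ℝ) (4 * π)) := by
  obtain ⟨hε₀, hε₁⟩ := hε
  refine ⟨yFn_gammaJunction hε₁, gammaUpper_gammaJunction hε₁, ?_⟩
  change ContinuousOn
    (fun z => if z ≤ gammaJunction ε then gammaLower ε z else gammaUpper ε z) (Ioc 0 (4 * π))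
  refine ContinuousOn.if ?_ ?_ ?_
  · rintro z ⟨-, hz⟩
    obtain rfl : z = gammaJunction ε := frontier_Iic.subset hz
    exact (gammaUpper_gammaJunction hε₁).symm
  · exact (continuousOn_gammaLower hε₀).mono fun z hz => hz.1.1.le
  · refine (continuousOn_gammaUpper hε₀ hε₁).mono fun z hz => ⟨?_, hz.1.2⟩
    exact closure_minimal (fun w hw => (not_le.1 hw).le) isClosed_Ici hz.2
end

section
/- Let ε ∈ (0,1) and z ∈ (4π/(3−2ε), 4π]. Then there exists a continuously differentiable function h : (0, γ(z)) → (0, z^{3/2}) such that lim_{s→0⁺} h(s) = z^{3/2}, lim_{s→γ(z)⁻} h(s) = 0, lim_{s→0⁺} h'(s) = 0, and for all s ∈ (0, γ(z)): h'(s) = −(36π − 18(1−ε) y(z) h(s)^{−1/3} − 9 h(s)^{2/3})^{1/2} if h(s) ≥ y(z), and h'(s) = −(36π − 27(1−ε) y(z)^{2/3} − 9ε h(s)^{2/3})^{1/2} if h(s) ≤ y(z). Moreover h is twice continuously differentiable and satisfies h''(s) = min{ (36π − h'(s)²)/(6 h(s)) − (9/2) h(s)^{−1/3}, −3ε h(s)^{−1/3}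 } on (0, γ(z)). -/
open Real MeasureTheory Set Filter

/-- The comparison function `γ` for `z ∈ (4π/(3−2ε), 4π]`. -/
noncomputable def gammaHigh (ε z : ℝ) : ℝ :=
  (∫ x in (0:ℝ)..(yFn ε z),
      (36 * π - 27 * (1 - ε) * (yFn ε z) ^ (2/3 : ℝ) - 9 * ε * x ^ (2/3 : ℝ)) ^ (-(1/2) : ℝ)) +
  (∫ x in (yFn ε z)..(z ^ (3/2 : ℝ)),
      (36 * π - 18 * (1 - ε) * (yFn ε z) * x ^ (-(1/3) : ℝ) - 9 * x ^ (2/3 : ℝ)) ^ (-(1/2) : ℝ))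

/-!
Separation of variables turns `h' = -√(F (h s))` into the statement that `h` inverts the travel time
from `z^{3/2}` down to `x`, that is `∫ 1/√F` over `[x, z^{3/2}]`; it takes time `γ(z)` to reach `0`.
The two formulas for the squared speed `F` and their first derivatives agree at `y(z)`, so `F` is
`C¹`, and `y(z)` is chosen so that `F` vanishes at `z^{3/2}`. Since `F' ≤ -c < 0`, that zero is
simple: `F` is positive below it and `1/√F` is integrable up to it. Differentiating `(h')² = F ∘ h`
gives `h'' = F'(h) / 2`, and on either side of `y(z)` the branch of `F'` in force is the smaller
one.
-/

section InverseFunction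

variable {α β : Type*}
  [ConditionallyCompleteLinearOrder α] [TopologicalSpace α] [OrderTopology α] [DenselyOrdered α]
  [LinearOrder β] [TopologicalSpace β] [OrderTopology β]

lemma exists_continuous_invOn_Icc {f : α → β} {a b : α} (hab : a ≤ b)
    (hf : ContinuousOn f (Icc a b)) (hmono : StrictMonoOn f (Icc a b)) :
    ∃ g : β → α, Continuous g ∧ MapsTo g (Icc (f a) (f b)) (Icc a b) ∧
      InvOn g f (Icc a b) (Icc (f a) (f b)) := by
  have himage : f '' Icc a b = Icc (f a) (f b) := hf.image_Icc_of_monotoneOn hab hmono.monotoneOn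
  have hfab : f a ≤ f b := hmono.monotoneOn (left_mem_Icc.2 hab) (right_mem_Icc.2 hab) hab
  let e : Icc a b ≃o Icc (f a) (f b) :=
    (hmono.orderIso f (Icc a b)).trans (OrderIso.setCongr _ _ himage)
  refine ⟨IccExtend hfab (Subtype.val ∘ e.symm), ?_, ?_, ?_, ?_⟩
  · exact (continuous_subtype_val.comp e.symm.continuous).Icc_extend'
  · exact fun t _ ↦ (e.symm _).2
  · intro x hx
    have hfx : f x ∈ Icc (f a) (f b) := himage ▸ mem_image_of_mem f hx
    rw [IccExtend_of_mem _ _ hfx]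
    exact congrArg Subtype.val (e.symm_apply_apply ⟨x, hx⟩)
  · intro t ht
    rw [IccExtend_of_mem _ _ ht]
    exact congrArg Subtype.val (e.apply_symm_apply ⟨t, ht⟩)

end InverseFunction

lemma hasDerivAt_ite_le {E : Type*} [NormedAddCommGroup E] [NormedSpace ℝ E] {f g : ℝ → E} {d : E}
    {x y : ℝ} (hfg : f y = g y) (hf : x ≤ y → HasDerivAt f d x) (hg : y ≤ x → HasDerivAt g d x) :
    HasDerivAt (fun t ↦ if t ≤ y then f t else g t) d x := by
  have eqOn_right : EqOn (fun t ↦ if t ≤ y then f t else g t) g (Ici y) := by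
    intro t ht
    rcases (mem_Ici.1 ht).eq_or_lt with rfl | hlt
    · simp [hfg]
    · exact if_neg hlt.not_ge
  have left (h : x ≤ y) : HasDerivWithinAt (fun t ↦ if t ≤ y then f t else g t) d (Iic y) x :=
    (hf h).hasDerivWithinAt.congr (fun t ht ↦ if_pos ht) (if_pos h)
  have right (h : y ≤ x) : HasDerivWithinAt (fun t ↦ if t ≤ y then f t else g t) d (Ici y) x :=
    (hg h).hasDerivWithinAt.congr eqOn_right (eqOn_right h)
  rcases lt_trichotomy x y with h | h | h
  · exact (left h.le).hasDerivAt (Iic_mem_nhds h)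
  · simpa using (left h.le).union (right h.ge)
  · exact (right h.le).hasDerivAt (Ici_mem_nhds h)

lemma rpow_neg_half (x : ℝ) : x ^ (-(1 / 2) : ℝ) = (√x)⁻¹ := by
  rcases le_or_gt 0 x with hx | hx
  · rw [rpow_neg hx, sqrt_eq_rpow]
  · rw [rpow_def_of_neg hx, sqrt_eq_zero_of_nonpos hx.le, inv_zero,
      show (-(1 / 2) : ℝ) * π = -(π / 2) by ring, cos_neg, cos_pi_div_two, mul_zero]

lemma rpow_two_thirds {x : ℝ} (hx : 0 ≤ x) : x ^ (2 / 3 : ℝ) = x * x ^ (-(1 / 3) : ℝ) := by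
  rw [← rpow_one_add' hx (by norm_num)]
  norm_num

lemma intervalIntegrable_inv_sqrt_of_mul_sub_le {F : ℝ → ℝ} {a b c : ℝ} (hab : a ≤ b) (hc : 0 < c)
    (hF : ContinuousOn F (Ioo a b)) (hle : ∀ x ∈ Ioo a b, c * (b - x) ≤ F x) :
    IntervalIntegrable (fun x ↦ (√(F x))⁻¹) volume a b := by
  have hlin_pos : ∀ x ∈ Ioo a b, 0 < c * (b - x) := fun x hx ↦ mul_pos hc (sub_pos.2 hx.2)
  have hcont : ContinuousOn (fun x ↦ (√(F x))⁻¹) (Ioo a b) :=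
    hF.sqrt.inv₀ fun x hx ↦ (sqrt_pos.2 ((hlin_pos x hx).trans_le (hle x hx))).ne'
  have hdom : IntervalIntegrable (fun x ↦ (√c)⁻¹ * (b - x) ^ (-(1 / 2) : ℝ)) volume a b := by
    have hpow : IntervalIntegrable (fun x : ℝ ↦ x ^ (-(1 / 2) : ℝ)) volume (b - a) (b - b) :=
      intervalIntegral.intervalIntegrable_rpow' (by norm_num)
    simpa using (hpow.comp_sub_left b).const_mul (√c)⁻¹
  rw [intervalIntegrable_iff_integrableOn_Ioo_of_le hab] at hdom ⊢
  refine hdom.mono' (hcont.aestronglyMeasurable measurableSet_Ioo) ?_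
  refine ae_restrict_of_forall_mem measurableSet_Ioo fun x hx ↦ ?_
  rw [norm_of_nonneg (by positivity), rpow_neg_half, ← mul_inv, ← sqrt_mul hc.le]
  exact inv_anti₀ (sqrt_pos.2 (hlin_pos x hx)) (sqrt_le_sqrt (hle x hx))

/-- `IsDescent v a b T h` says that `h` runs down from `b` at time `0` to `a` at time `T`, moving
through `(a, b)` in between with speed `v (h s)`. Requiring `h` to be continuous on the whole line
encodes its limits at both ends of `(0, T)`. -/
structure IsDescent (v : ℝ → ℝ) (a b T : ℝ) (h : ℝ → ℝ) : Prop where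
  continuous : Continuous h
  map_start : h 0 = b
  map_finish : h T = a
  mem_Ioo : ∀ s ∈ Ioo 0 T, h s ∈ Ioo a b
  hasDerivAt : ∀ s ∈ Ioo 0 T, HasDerivAt h (-v (h s)) s

section Existence

variable {v : ℝ → ℝ} {a b : ℝ}

lemma strictMonoOn_integral_of_pos {f : ℝ → ℝ} (hpos : ∀ x ∈ Ioo a b, 0 < f x)
    (hint : IntervalIntegrable f volume a b) :
    StrictMonoOn (fun x ↦ ∫ t in a..x, f t) (Icc a b) := by
  intro x hx y hy hxy
  have hint_sub {p q : ℝ} (hp : p ∈ Icc a b) (hq : q ∈ Icc a b) :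
      IntervalIntegrable f volume p q :=
    hint.mono_set (uIcc_subset_uIcc (Icc_subset_uIcc hp) (Icc_subset_uIcc hq))
  have ha : a ∈ Icc a b := left_mem_Icc.2 (hx.1.trans hx.2)
  have hxy_pos : 0 < ∫ t in x..y, f t :=
    intervalIntegral.intervalIntegral_pos_of_pos_on (hint_sub hx hy)
      (fun t ht ↦ hpos t ⟨hx.1.trans_lt ht.1, ht.2.trans_le hy.2⟩) hxy
  rw [← intervalIntegral.integral_interval_sub_left (hint_sub ha hy) (hint_sub ha hx)] at hxy_pos
  exact sub_pos.1 hxy_pos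

lemma hasDerivAt_integral_of_continuousOn_Ioo {f : ℝ → ℝ} (hf : ContinuousOn f (Ioo a b))
    (hint : IntervalIntegrable f volume a b) {x : ℝ} (hx : x ∈ Ioo a b) :
    HasDerivAt (fun x ↦ ∫ t in a..x, f t) (f x) x :=
  intervalIntegral.integral_hasDerivAt_right
    (hint.mono_set (uIcc_subset_uIcc left_mem_uIcc (Icc_subset_uIcc (Ioo_subset_Icc_self hx))))
    (hf.stronglyMeasurableAtFilter isOpen_Ioo x hx) (hf.continuousAt (isOpen_Ioo.mem_nhds hx))

theorem exists_isDescent (hab : a ≤ b) (hv : ContinuousOn v (Ioo a b))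
    (hpos : ∀ x ∈ Ioo a b, 0 < v x) (hint : IntervalIntegrable (fun x ↦ (v x)⁻¹) volume a b) :
    ∃ h, IsDescent v a b (∫ x in a..b, (v x)⁻¹) h := by
  set τ : ℝ → ℝ := fun x ↦ ∫ t in a..x, (v t)⁻¹
  have hτ_mono : StrictMonoOn τ (Icc a b) :=
    strictMonoOn_integral_of_pos (fun x hx ↦ inv_pos.2 (hpos x hx)) hint
  have hτ_cont : ContinuousOn τ (Icc a b) := by
    simpa only [uIcc_of_le hab] using
      intervalIntegral.continuousOn_primitive_interval' hint left_mem_uIcc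
  have hτ_deriv : ∀ x ∈ Ioo a b, HasDerivAt τ (v x)⁻¹ x := fun x hx ↦
    hasDerivAt_integral_of_continuousOn_Ioo (hv.inv₀ fun x hx ↦ (hpos x hx).ne') hint hx
  have hτa : τ a = 0 := intervalIntegral.integral_same
  have ha : a ∈ Icc a b := left_mem_Icc.2 hab
  have hb : b ∈ Icc a b := right_mem_Icc.2 hab
  obtain ⟨g, hg_cont, hg_maps, hgτ, hτg⟩ := exists_continuous_invOn_Icc hab hτ_cont hτ_mono
  rw [hτa] at hg_maps hτg
  have hg_mem : ∀ t ∈ Ioo 0 (τ b), g t ∈ Ioo a b := fun t ht ↦ by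
    have ht' := Ioo_subset_Icc_self ht
    constructor
    · rw [← hτ_mono.lt_iff_lt ha (hg_maps ht'), hτg ht', hτa]
      exact ht.1
    · rw [← hτ_mono.lt_iff_lt (hg_maps ht') hb, hτg ht']
      exact ht.2
  have hg_deriv : ∀ t ∈ Ioo 0 (τ b), HasDerivAt g (v (g t)) t := fun t ht ↦ by
    simpa only [inv_inv] using (hτ_deriv _ (hg_mem t ht)).of_local_left_inverse
      hg_cont.continuousAt (inv_ne_zero (hpos _ (hg_mem t ht)).ne')
      (eventually_of_mem (isOpen_Ioo.mem_nhds ht) fun u hu ↦ hτg (Ioo_subset_Icc_self hu))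
  have hreflect : ∀ s ∈ Ioo 0 (τ b), τ b - s ∈ Ioo 0 (τ b) := fun s hs ↦
    ⟨sub_pos.2 hs.2, sub_lt_self _ hs.1⟩
  exact ⟨fun s ↦ g (τ b - s),
    { continuous := hg_cont.comp (continuous_const.sub continuous_id)
      map_start := by rw [sub_zero, hgτ hb]
      map_finish := by rw [sub_self, ← hτa, hgτ ha]
      mem_Ioo := fun s hs ↦ hg_mem _ (hreflect s hs)
      hasDerivAt := fun s hs ↦ (hg_deriv _ (hreflect s hs)).comp_const_sub (τ b) s }⟩

end Existence

namespace IsDescent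

open scoped Topology

variable {v F A h : ℝ → ℝ} {a b T : ℝ}

lemma tendsto_start (hh : IsDescent v a b T h) : Tendsto h (𝓝[Ioo 0 T] 0) (𝓝 b) := by
  simpa only [hh.map_start] using (hh.continuous.tendsto 0).mono_left nhdsWithin_le_nhds

lemma tendsto_finish (hh : IsDescent v a b T h) : Tendsto h (𝓝[Ioo 0 T] T) (𝓝 a) := by
  simpa only [hh.map_finish] using (hh.continuous.tendsto T).mono_left nhdsWithin_le_nhds

lemma deriv_eq (hh : IsDescent v a b T h) {s : ℝ} (hs : s ∈ Ioo 0 T) : deriv h s = -v (h s) :=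
  (hh.hasDerivAt s hs).deriv

lemma tendsto_deriv_start (hh : IsDescent v a b T h) (hv : ContinuousAt v b) :
    Tendsto (deriv h) (𝓝[Ioo 0 T] 0) (𝓝 (-v b)) :=
  (hv.tendsto.comp hh.tendsto_start).neg.congr' <|
    eventually_of_mem self_mem_nhdsWithin fun _ hs ↦ (hh.deriv_eq hs).symm

lemma hasDerivAt_deriv (hh : IsDescent (fun x ↦ √(F x)) a b T h) (hpos : ∀ x ∈ Ioo a b, 0 < F x)
    (hF : ∀ x ∈ Ioo a b, HasDerivAt F (2 * A x) x) {s : ℝ} (hs : s ∈ Ioo 0 T) :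
    HasDerivAt (deriv h) (A (h s)) s := by
  have hmem := hh.mem_Ioo s hs
  have hsqrt : √(F (h s)) ≠ 0 := (sqrt_pos.2 (hpos _ hmem)).ne'
  have hcomp : HasDerivAt (fun t ↦ -√(F (h t))) (A (h s)) s := by
    refine (((hF _ hmem).comp s (hh.hasDerivAt s hs)).sqrt (hpos _ hmem).ne').neg.congr_deriv ?_
    simp only [Function.comp_apply]
    field_simp
  exact hcomp.congr_of_eventuallyEq <|
    eventually_of_mem (isOpen_Ioo.mem_nhds hs) fun _ ht ↦ hh.deriv_eq ht

lemma contDiffOn_two (hh : IsDescent (fun x ↦ √(F x)) a b T h) (hpos : ∀ x ∈ Ioo a b, 0 < F x)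
    (hF : ∀ x ∈ Ioo a b, HasDerivAt F (2 * A x) x) (hA : ContinuousOn A (Ioo a b)) :
    ContDiffOn ℝ 2 h (Ioo 0 T) := by
  have hderiv2 {s : ℝ} (hs : s ∈ Ioo 0 T) := hh.hasDerivAt_deriv hpos hF hs
  have hcont : ContinuousOn (deriv (deriv h)) (Ioo 0 T) :=
    (hA.comp hh.continuous.continuousOn hh.mem_Ioo).congr fun s hs ↦ (hderiv2 hs).deriv
  rw [← one_add_one_eq_two, contDiffOn_succ_iff_deriv_of_isOpen isOpen_Ioo]
  refine ⟨fun s hs ↦ (hh.hasDerivAt s hs).differentiableAt.differentiableWithinAt, by simp, ?_⟩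
  rw [← zero_add (1 : WithTop ℕ∞), contDiffOn_succ_iff_deriv_of_isOpen isOpen_Ioo, contDiffOn_zero]
  exact ⟨fun s hs ↦ (hderiv2 hs).differentiableAt.differentiableWithinAt, by simp, hcont⟩

end IsDescent

/-- The value of `h'²` prescribed at height `x ≤ y`. -/
noncomputable def lowerSpeedSq (ε y x : ℝ) : ℝ :=
  36 * π - 27 * (1 - ε) * y ^ (2 / 3 : ℝ) - 9 * ε * x ^ (2 / 3 : ℝ)

/-- The value of `h'²` prescribed at height `x ≥ y`. -/
noncomputable def upperSpeedSq (ε y x : ℝ) : ℝ :=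
  36 * π - 18 * (1 - ε) * y * x ^ (-(1 / 3) : ℝ) - 9 * x ^ (2 / 3 : ℝ)

/-- The value of `h'²` prescribed at height `x`, with the regimes switching at height `y`. -/
noncomputable def speedSq (ε y x : ℝ) : ℝ :=
  if x ≤ y then lowerSpeedSq ε y x else upperSpeedSq ε y x

/-- The acceleration `h''` at height `x`, equal to half the derivative of `speedSq ε y`. The two
branches of the minimum belong to `x ≥ y` and to `x ≤ y`. -/
noncomputable def accel (ε y x : ℝ) : ℝ :=
  3 * x ^ (-(1 / 3) : ℝ) * min ((1 - ε) * (y / x) - 1) (-ε)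

section SpeedProfile

variable {ε x y M : ℝ}

lemma lowerSpeedSq_eq_upperSpeedSq (hy : 0 ≤ y) : lowerSpeedSq ε y y = upperSpeedSq ε y y := by
  rw [lowerSpeedSq, upperSpeedSq, rpow_two_thirds hy]
  ring

lemma speedSq_of_le (h : x ≤ y) : speedSq ε y x = lowerSpeedSq ε y x := if_pos h

lemma speedSq_of_ge (hx : 0 ≤ x) (h : y ≤ x) : speedSq ε y x = upperSpeedSq ε y x := by
  rcases h.eq_or_lt with rfl | hlt
  · rw [speedSq_of_le le_rfl, lowerSpeedSq_eq_upperSpeedSq hx]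
  · exact if_neg hlt.not_ge

lemma accel_of_le (hε : ε ≤ 1) (hx : 0 < x) (h : x ≤ y) :
    accel ε y x = 3 * x ^ (-(1 / 3) : ℝ) * -ε := by
  have hyx : 1 ≤ y / x := (one_le_div hx).2 h
  rw [accel, min_eq_right (by nlinarith)]

lemma accel_of_ge (hε : ε ≤ 1) (hx : 0 < x) (h : y ≤ x) :
    accel ε y x = 3 * x ^ (-(1 / 3) : ℝ) * ((1 - ε) * (y / x) - 1) := by
  have hyx : y / x ≤ 1 := (div_le_one hx).2 h
  rw [accel, min_eq_left (by nlinarith)]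

lemma hasDerivAt_rpow_two_thirds (hx : x ≠ 0) :
    HasDerivAt (fun t : ℝ ↦ t ^ (2 / 3 : ℝ)) ((2 / 3) * x ^ (-(1 / 3) : ℝ)) x := by
  convert hasDerivAt_rpow_const (p := (2 / 3 : ℝ)) (Or.inl hx) using 3
  norm_num

lemma hasDerivAt_lowerSpeedSq (hx : x ≠ 0) :
    HasDerivAt (lowerSpeedSq ε y) (2 * (3 * x ^ (-(1 / 3) : ℝ) * -ε)) x :=
  (((hasDerivAt_rpow_two_thirds hx).const_mul (9 * ε)).const_sub _).congr_deriv (by ring)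

lemma hasDerivAt_upperSpeedSq (hx : x ≠ 0) :
    HasDerivAt (upperSpeedSq ε y) (2 * (3 * x ^ (-(1 / 3) : ℝ) * ((1 - ε) * (y / x) - 1))) x := by
  have hneg_third := hasDerivAt_rpow_const (p := (-(1 / 3) : ℝ)) (Or.inl hx)
  refine (((hneg_third.const_mul (18 * (1 - ε) * y)).const_sub (36 * π)).sub
    ((hasDerivAt_rpow_two_thirds hx).const_mul 9)).congr_deriv ?_
  rw [rpow_sub_one hx]
  ring

lemma hasDerivAt_speedSq (hε : ε ≤ 1) (hy : 0 ≤ y) (hx : 0 < x) :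
    HasDerivAt (speedSq ε y) (2 * accel ε y x) x := by
  refine hasDerivAt_ite_le (lowerSpeedSq_eq_upperSpeedSq hy) (fun h ↦ ?_) fun h ↦ ?_
  · rw [accel_of_le hε hx h]
    exact hasDerivAt_lowerSpeedSq hx.ne'
  · rw [accel_of_ge hε hx h]
    exact hasDerivAt_upperSpeedSq hx.ne'

lemma continuousOn_accel : ContinuousOn (accel ε y) (Ioi 0) := by
  have hne : ∀ x ∈ Ioi (0 : ℝ), x ≠ 0 := fun x hx ↦ (mem_Ioi.1 hx).ne'
  refine ((continuousOn_id.rpow_const fun x hx ↦ Or.inl (hne x hx)).const_mul 3).mul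
    (ContinuousOn.inf ?_ continuousOn_const)
  exact ((continuousOn_const.div continuousOn_id hne).const_mul (1 - ε)).sub continuousOn_const

lemma accel_le (hε : 0 ≤ ε) (hx : x ∈ Ioc 0 M) : accel ε y x ≤ -(3 * ε * M ^ (-(1 / 3) : ℝ)) := by
  have hpow : M ^ (-(1 / 3) : ℝ) ≤ x ^ (-(1 / 3) : ℝ) :=
    rpow_le_rpow_of_nonpos hx.1 hx.2 (by norm_num)
  have hnonneg : 0 ≤ x ^ (-(1 / 3) : ℝ) := rpow_nonneg hx.1.le _
  calc accel ε y x ≤ 3 * x ^ (-(1 / 3) : ℝ) * -ε := by unfold accel; gcongr; exact min_le_right _ _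
    _ = -(3 * ε * x ^ (-(1 / 3) : ℝ)) := by ring
    _ ≤ -(3 * ε * M ^ (-(1 / 3) : ℝ)) := by gcongr

lemma accel_eq_min (hε : ε ≤ 1) (hx : 0 < x) :
    accel ε y x = min ((36 * π - speedSq ε y x) / (6 * x) - (9 / 2) * x ^ (-(1 / 3) : ℝ))
      (-3 * ε * x ^ (-(1 / 3) : ℝ)) := by
  rcases le_total x y with h | h
  · have hpow : x * x ^ (-(1 / 3) : ℝ) ≤ y ^ (2 / 3 : ℝ) := by
      rw [← rpow_two_thirds hx.le]
      gcongr
    have hgap : (36 * π - lowerSpeedSq ε y x) / (6 * x) - (9 / 2) * x ^ (-(1 / 3) : ℝ)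
          - -3 * ε * x ^ (-(1 / 3) : ℝ)
        = (9 / 2) * (1 - ε) * (y ^ (2 / 3 : ℝ) - x * x ^ (-(1 / 3) : ℝ)) / x := by
      rw [lowerSpeedSq, rpow_two_thirds hx.le]
      field_simp
      ring
    rw [accel_of_le hε hx h, speedSq_of_le h, min_eq_right]
    · ring
    · rw [← sub_nonneg, hgap]
      exact div_nonneg (mul_nonneg (by linarith) (sub_nonneg.2 hpow)) hx.le
  · have hupper : (36 * π - upperSpeedSq ε y x) / (6 * x) - (9 / 2) * x ^ (-(1 / 3) : ℝ)
        = 3 * x ^ (-(1 / 3) : ℝ) * ((1 - ε) * (y / x) - 1) := by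
      rw [upperSpeedSq, rpow_two_thirds hx.le]
      field_simp
      ring
    rw [speedSq_of_ge hx.le h, hupper, accel, mul_min_of_nonneg _ _ (by positivity)]
    congr 1
    ring

lemma mul_sub_le_speedSq (hε : ε ∈ Icc 0 1) (hy : 0 ≤ y) (hM : speedSq ε y M = 0)
    (hx : x ∈ Ioc 0 M) : 6 * ε * M ^ (-(1 / 3) : ℝ) * (M - x) ≤ speedSq ε y x := by
  have hderiv : ∀ t ∈ Ioc 0 M, HasDerivAt (speedSq ε y) (2 * accel ε y t) t := fun t ht ↦
    hasDerivAt_speedSq hε.2 hy ht.1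
  have hmvt := (convex_Ioc 0 M).image_sub_le_mul_sub_of_deriv_le
    (fun t ht ↦ (hderiv t ht).continuousAt.continuousWithinAt)
    (fun t ht ↦ (hderiv t (interior_subset ht)).differentiableAt.differentiableWithinAt)
    (C := 2 * -(3 * ε * M ^ (-(1 / 3) : ℝ)))
    (fun t ht ↦ by
      rw [(hderiv t (interior_subset ht)).deriv]
      gcongr
      exact accel_le hε.1 (interior_subset ht))
    x hx M (right_mem_Ioc.2 (hx.1.trans_le hx.2)) hx.2
  linarith

lemma speedSq_pos (hε : ε ∈ Ioc 0 1) (hy : 0 ≤ y) (hM : speedSq ε y M = 0) (hx : x ∈ Ioo 0 M) :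
    0 < speedSq ε y x := by
  have hrate : 0 < 6 * ε * M ^ (-(1 / 3) : ℝ) :=
    mul_pos (mul_pos (by norm_num) hε.1) (rpow_pos_of_pos (hx.1.trans hx.2) _)
  exact (mul_pos hrate (sub_pos.2 hx.2)).trans_le
    (mul_sub_le_speedSq (Ioc_subset_Icc_self hε) hy hM (Ioo_subset_Ioc_self hx))

lemma intervalIntegrable_inv_sqrt_speedSq (hε : ε ∈ Ioc 0 1) (hy : 0 ≤ y) (hM0 : 0 < M)
    (hM : speedSq ε y M = 0) :
    IntervalIntegrable (fun x ↦ (√(speedSq ε y x))⁻¹) volume 0 M :=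
  intervalIntegrable_inv_sqrt_of_mul_sub_le hM0.le
    (mul_pos (mul_pos (by norm_num) hε.1) (rpow_pos_of_pos hM0 _))
    (fun _ hx ↦ (hasDerivAt_speedSq hε.2 hy hx.1).continuousAt.continuousWithinAt)
    (fun _ hx ↦ mul_sub_le_speedSq (Ioc_subset_Icc_self hε) hy hM (Ioo_subset_Ioc_self hx))

end SpeedProfile

section Heights

variable {ε z : ℝ}

lemma rpow_three_halves (hz : 0 ≤ z) : z ^ (3 / 2 : ℝ) = z * z ^ (1 / 2 : ℝ) := by
  rw [← rpow_one_add' hz (by norm_num)]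
  norm_num

lemma pos_of_four_pi_div_lt (hε : ε < 1) (hz : 4 * π / (3 - 2 * ε) < z) : 0 < z :=
  (div_pos (by positivity) (by linarith)).trans hz

lemma yFn_mem_Ico (hε : ε < 1) (hz : z ∈ Ioc (4 * π / (3 - 2 * ε)) (4 * π)) :
    yFn ε z ∈ Ico 0 (z ^ (3 / 2 : ℝ)) := by
  have hz0 := pos_of_four_pi_div_lt hε hz.1
  have hroot : 0 < z ^ (1 / 2 : ℝ) := rpow_pos_of_pos hz0 _
  have hlower : 4 * π < z * (3 - 2 * ε) := (div_lt_iff₀ (by linarith)).1 hz.1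
  refine ⟨div_nonneg (mul_nonneg hroot.le (sub_nonneg.2 hz.2)) (by linarith), ?_⟩
  rw [yFn, rpow_three_halves hz0.le, div_lt_iff₀ (by linarith)]
  calc z ^ (1 / 2 : ℝ) * (4 * π - z) < z ^ (1 / 2 : ℝ) * (z * (2 * (1 - ε))) := by gcongr; linarith
    _ = z * z ^ (1 / 2 : ℝ) * (2 * (1 - ε)) := by ring

lemma speedSq_yFn_eq_zero (hε : ε ≠ 1) (hz : 0 < z) (hy : yFn ε z ≤ z ^ (3 / 2 : ℝ)) :
    speedSq ε (yFn ε z) (z ^ (3 / 2 : ℝ)) = 0 := by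
  have hone_sub : 1 - ε ≠ 0 := sub_ne_zero.2 hε.symm
  have hneg_third : (z ^ (3 / 2 : ℝ)) ^ (-(1 / 3) : ℝ) = (z ^ (1 / 2 : ℝ))⁻¹ := by
    rw [← rpow_mul hz.le, ← rpow_neg hz.le]
    norm_num
  have htwo_thirds : (z ^ (3 / 2 : ℝ)) ^ (2 / 3 : ℝ) = z := by
    rw [← rpow_mul hz.le]
    norm_num
  have hroot : z ^ (1 / 2 : ℝ) ≠ 0 := (rpow_pos_of_pos hz _).ne'
  rw [speedSq_of_ge (rpow_nonneg hz.le _) hy, upperSpeedSq, hneg_third, htwo_thirds, yFn]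
  field_simp
  ring

lemma gammaHigh_eq_integral (hy : yFn ε z ∈ Icc 0 (z ^ (3 / 2 : ℝ)))
    (hint : IntervalIntegrable (fun x ↦ (√(speedSq ε (yFn ε z) x))⁻¹) volume 0 (z ^ (3 / 2 : ℝ))) :
    gammaHigh ε z = ∫ x in (0 : ℝ)..z ^ (3 / 2 : ℝ), (√(speedSq ε (yFn ε z) x))⁻¹ := by
  have hy_mem : yFn ε z ∈ uIcc 0 (z ^ (3 / 2 : ℝ)) := Icc_subset_uIcc hy
  rw [← intervalIntegral.integral_add_adjacent_intervals
    (hint.mono_set (uIcc_subset_uIcc left_mem_uIcc hy_mem))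
    (hint.mono_set (uIcc_subset_uIcc hy_mem right_mem_uIcc)), gammaHigh]
  simp only [rpow_neg_half]
  congr 1
  · refine intervalIntegral.integral_congr_Ioo_of_le hy.1 fun x hx ↦ ?_
    simp only [speedSq_of_le hx.2.le, lowerSpeedSq]
  · refine intervalIntegral.integral_congr_Ioo_of_le hy.2 fun x hx ↦ ?_
    simp only [speedSq_of_ge (hy.1.trans hx.1.le) hx.1.le, upperSpeedSq]

theorem exists_isDescent_gammaHigh (hε : ε ∈ Ioo 0 1) (hz : 0 < z)
    (hy : yFn ε z ∈ Icc 0 (z ^ (3 / 2 : ℝ))) :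
    ∃ h, IsDescent (fun x ↦ √(speedSq ε (yFn ε z) x)) 0 (z ^ (3 / 2 : ℝ)) (gammaHigh ε z) h := by
  have hM : 0 < z ^ (3 / 2 : ℝ) := rpow_pos_of_pos hz _
  have hzero := speedSq_yFn_eq_zero hε.2.ne hz hy.2
  have hint := intervalIntegrable_inv_sqrt_speedSq (Ioo_subset_Ioc_self hε) hy.1 hM hzero
  rw [gammaHigh_eq_integral hy hint]
  refine exists_isDescent hM.le (fun x hx ↦ ?_) (fun x hx ↦ ?_) hint
  · exact (hasDerivAt_speedSq hε.2.le hy.1 hx.1).continuousAt.sqrt.continuousWithinAt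
  · exact sqrt_pos.2 (speedSq_pos (Ioo_subset_Ioc_self hε) hy.1 hzero hx)

end Heights

/-- For `ε ∈ (0,1)` and `z ∈ (4π/(3−2ε), 4π]`, there is a continuously differentiable
function `h : (0, γ(z)) → (0, z^{3/2})` with `h → z^{3/2}` at `0`, `h → 0` at `γ(z)`,
`h' → 0` at `0`, satisfying the stated piecewise first-order ODE; moreover `h` is twice
continuously differentiable and satisfies
`h'' = min{(36π − (h')²)/(6h) − (9/2) h^{−1/3}, −3ε h^{−1/3}}` on `(0, γ(z))`. -/
theorem stmt_7 (ε z : ℝ) (hε : ε ∈ Set.Ioo (0:ℝ) 1)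
    (hz : z ∈ Set.Ioc (4 * π / (3 - 2 * ε)) (4 * π)) :
    ∃ h : ℝ → ℝ,
      (∀ s ∈ Set.Ioo (0:ℝ) (gammaHigh ε z), h s ∈ Set.Ioo (0:ℝ) (z ^ (3/2 : ℝ))) ∧
      ContDiffOn ℝ 2 h (Set.Ioo (0:ℝ) (gammaHigh ε z)) ∧
      Filter.Tendsto h (nhdsWithin 0 (Set.Ioo (0:ℝ) (gammaHigh ε z)))
        (nhds (z ^ (3/2 : ℝ))) ∧
      Filter.Tendsto h (nhdsWithin (gammaHigh ε z) (Set.Ioo (0:ℝ) (gammaHigh ε z)))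
        (nhds 0) ∧
      Filter.Tendsto (deriv h) (nhdsWithin 0 (Set.Ioo (0:ℝ) (gammaHigh ε z))) (nhds 0) ∧
      (∀ s ∈ Set.Ioo (0:ℝ) (gammaHigh ε z),
        (yFn ε z ≤ h s →
          deriv h s = -Real.sqrt (36 * π - 18 * (1 - ε) * (yFn ε z) * (h s) ^ (-(1/3) : ℝ)
            - 9 * (h s) ^ (2/3 : ℝ))) ∧
        (h s ≤ yFn ε z →
          deriv h s = -Real.sqrt (36 * π - 27 * (1 - ε) * (yFn ε z) ^ (2/3 : ℝ)
            - 9 * ε * (h s) ^ (2/3 : ℝ)))) ∧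
      (∀ s ∈ Set.Ioo (0:ℝ) (gammaHigh ε z),
        deriv (deriv h) s
          = min ((36 * π - (deriv h s) ^ 2) / (6 * h s) - (9/2) * (h s) ^ (-(1/3) : ℝ))
                (-3 * ε * (h s) ^ (-(1/3) : ℝ))) := by
  have hz0 := pos_of_four_pi_div_lt hε.2 hz.1
  have hM : 0 < z ^ (3 / 2 : ℝ) := rpow_pos_of_pos hz0 _
  have hy := Ico_subset_Icc_self (yFn_mem_Ico hε.2 hz)
  have hzero := speedSq_yFn_eq_zero hε.2.ne hz0 hy.2
  have hpos : ∀ x ∈ Ioo 0 (z ^ (3 / 2 : ℝ)), 0 < speedSq ε (yFn ε z) x := fun x hx ↦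
    speedSq_pos (Ioo_subset_Ioc_self hε) hy.1 hzero hx
  have hF : ∀ x ∈ Ioo 0 (z ^ (3 / 2 : ℝ)),
      HasDerivAt (speedSq ε (yFn ε z)) (2 * accel ε (yFn ε z) x) x := fun x hx ↦
    hasDerivAt_speedSq hε.2.le hy.1 hx.1
  obtain ⟨h, hh⟩ := exists_isDescent_gammaHigh hε hz0 hy
  refine ⟨h, hh.mem_Ioo, hh.contDiffOn_two hpos hF (continuousOn_accel.mono Ioo_subset_Ioi_self),
    hh.tendsto_start, hh.tendsto_finish, ?_, fun s hs ↦ ⟨fun hle ↦ ?_, fun hle ↦ ?_⟩, fun s hs ↦ ?_⟩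
  · simpa only [hzero, sqrt_zero, neg_zero] using
      hh.tendsto_deriv_start (hasDerivAt_speedSq hε.2.le hy.1 hM).continuousAt.sqrt
  · rw [hh.deriv_eq hs, speedSq_of_ge (hh.mem_Ioo s hs).1.le hle, upperSpeedSq]
  · rw [hh.deriv_eq hs, speedSq_of_le hle, lowerSpeedSq]
  · rw [(hh.hasDerivAt_deriv hpos hF hs).deriv, hh.deriv_eq hs, neg_sq,
      sq_sqrt (hpos _ (hh.mem_Ioo s hs)).le, accel_eq_min hε.2.le (hh.mem_Ioo s hs).1]
end

section
/- Define σ : [0, π/2] → [0, π²] by σ(r) = 2πr − π sin(2r). Then σ is a strictly increasing bijection from [0, π/2] onto [0, π²], and the function h : (0, π²) → (0, (4π)^{3/2}) defined by h(s) = (4π)^{3/2} sin³(σ^{−1}(π² − s)) is differentiable and satisfies h'(s) = −(36π − 9 h(s)^{2/3})^{1/2} for all s ∈ (0, π²), with lim_{s→0⁺} h(s) = (4π)^{3/2} and lim_{s→π²⁻} h(s) = 0. Equivalently, h(π² − 2πr + π sin(2r)) = (4π)^{3/2} sin³(r) for all r ∈ (0, π/2). -/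
open Real Set Filter

/-- `σ(r) = 2πr − π sin(2r)`. -/
noncomputable def sigmaFn (r : ℝ) : ℝ := 2 * π * r - π * Real.sin (2 * r)

/-- The explicit solution `h(s) = (4π)^{3/2} sin³(σ⁻¹(π² − s))` of the ODE
`h' = −(36π − 9h^{2/3})^{1/2}`, where `σ⁻¹` is the inverse of `σ` on `[0, π/2]`. -/
noncomputable def hFn (s : ℝ) : ℝ :=
  (4 * π) ^ (3/2 : ℝ) *
    (Real.sin (Function.invFunOn sigmaFn (Set.Icc 0 (π / 2)) (π ^ 2 - s))) ^ 3

/-!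
Since `cos (2r) = 1 - 2 sin² r`, we have `σ' = 4π sin²`, so `σ` increases strictly from `σ 0 = 0`
to `σ (π / 2) = π²` and its inverse is differentiable away from the endpoints. In the parameter `r`
with `s = π² - σ r` one has `h = (4π)^{3/2} sin³ r`, hence
`h'(s) = 3 (4π)^{3/2} sin² r cos r / (-4π sin² r) = -3 (4π)^{1/2} cos r`, while
`36π - 9 h^{2/3} = 36π (1 - sin² r) = (3 (4π)^{1/2} cos r)²`.
-/

open scoped Topology

theorem continuousOn_image_of_leftInvOn_of_isCompact {X Y : Type*} [TopologicalSpace X]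
    [TopologicalSpace Y] [T2Space Y] {f : X → Y} {g : Y → X} {K : Set X} (hK : IsCompact K)
    (hf : ContinuousOn f K) (hg : LeftInvOn g f K) : ContinuousOn g (f '' K) := by
  refine continuousOn_iff_isClosed.2 fun C hC ↦ ⟨f '' (C ∩ K), ?_, ?_⟩
  · exact ((hK.inter_left hC).image_of_continuousOn (hf.mono inter_subset_right)).isClosed
  · rw [← hg.image_inter', inter_eq_left.2 (image_mono inter_subset_right), inter_comm]

theorem hasDerivAt_of_leftInvOn_of_isCompact {𝕜 : Type*} [NontriviallyNormedField 𝕜]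
    {f g : 𝕜 → 𝕜} {f' x : 𝕜} {K : Set 𝕜} (hK : IsCompact K) (hf : ContinuousOn f K)
    (hg : LeftInvOn g f K) (hx : x ∈ K) (hfK : f '' K ∈ 𝓝 (f x)) (hf' : HasDerivAt f f' x)
    (hf'0 : f' ≠ 0) : HasDerivAt g f'⁻¹ (f x) := by
  have hgf : g (f x) = x := hg hx
  have hfg : ∀ᶠ y in 𝓝 (f x), f (g y) = y := by
    filter_upwards [hfK] with y hy using hg.rightInvOn_image hy
  have hcont := (continuousOn_image_of_leftInvOn_of_isCompact hK hf hg).continuousAt hfK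
  exact HasDerivAt.of_local_left_inverse hcont (by rwa [hgf]) hf'0 hfg

section Powers

variable {a : ℝ}

theorem rpow_three_halves_eq_mul_sqrt (ha : 0 ≤ a) : a ^ (3 / 2 : ℝ) = a * √a := by
  rw [sqrt_eq_rpow, ← rpow_one_add' ha (by norm_num)]
  norm_num

theorem rpow_three_halves_mul_cube_rpow_two_thirds (ha : 0 ≤ a) {x : ℝ} (hx : 0 ≤ x) :
    (a ^ (3 / 2 : ℝ) * x ^ 3) ^ (2 / 3 : ℝ) = a * x ^ 2 := by
  rw [mul_rpow (by positivity) (by positivity), ← rpow_mul ha, ← rpow_natCast_mul hx]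
  norm_num

theorem sqrt_sub_rpow_two_thirds_sin_cube (ha : 0 ≤ a) {r : ℝ} (hr : r ∈ Icc 0 (π / 2)) :
    √(9 * a - 9 * (a ^ (3 / 2 : ℝ) * sin r ^ 3) ^ (2 / 3 : ℝ)) = 3 * √a * cos r := by
  have hsin : 0 ≤ sin r := sin_nonneg_of_nonneg_of_le_pi hr.1 (by linarith [hr.2, pi_pos])
  have hcos : 0 ≤ cos r := cos_nonneg_of_mem_Icc ⟨by linarith [hr.1, pi_pos], hr.2⟩
  rw [rpow_three_halves_mul_cube_rpow_two_thirds ha hsin, sin_sq,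
    show 9 * a - 9 * (a * (1 - cos r ^ 2)) = (3 * √a * cos r) ^ 2 by
      rw [mul_pow, mul_pow, sq_sqrt ha]; ring,
    sqrt_sq (by positivity)]

end Powers

theorem sin_mapsTo_Ioo_zero_pi_div_two : MapsTo sin (Ioo 0 (π / 2)) (Ioo 0 1) := by
  have hmono : StrictMonoOn sin (Icc 0 (π / 2)) :=
    strictMonoOn_sin.mono (Icc_subset_Icc_left (by linarith [pi_pos]))
  simpa only [sin_zero, sin_pi_div_two] using hmono.mapsTo_Ioo

theorem sigmaFn_zero : sigmaFn 0 = 0 := by simp [sigmaFn]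

theorem sigmaFn_pi_div_two : sigmaFn (π / 2) = π ^ 2 := by
  rw [sigmaFn, mul_div_cancel₀ π two_ne_zero, sin_pi]
  ring

theorem hasDerivAt_sigmaFn (r : ℝ) : HasDerivAt sigmaFn (4 * π * sin r ^ 2) r := by
  have hdouble : HasDerivAt (fun x : ℝ ↦ 2 * x) 2 r := hasDerivAt_const_mul 2
  refine ((hasDerivAt_const_mul (2 * π)).sub (hdouble.sin.const_mul π)).congr_deriv ?_
  rw [sin_sq_eq_half_sub]
  ring

theorem continuous_sigmaFn : Continuous sigmaFn :=
  continuous_iff_continuousAt.2 fun r ↦ (hasDerivAt_sigmaFn r).continuousAt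

theorem strictMonoOn_sigmaFn : StrictMonoOn sigmaFn (Icc 0 (π / 2)) := by
  refine strictMonoOn_of_deriv_pos (convex_Icc _ _) continuous_sigmaFn.continuousOn fun r hr ↦ ?_
  rw [interior_Icc] at hr
  have hsin : 0 < sin r := (sin_mapsTo_Ioo_zero_pi_div_two hr).1
  rw [(hasDerivAt_sigmaFn r).deriv]
  positivity

theorem image_sigmaFn_Icc : sigmaFn '' Icc 0 (π / 2) = Icc 0 (π ^ 2) := by
  rw [continuous_sigmaFn.continuousOn.image_Icc_of_monotoneOn pi_div_two_pos.le
    strictMonoOn_sigmaFn.monotoneOn, sigmaFn_zero, sigmaFn_pi_div_two]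

theorem image_sigmaFn_Ioo : sigmaFn '' Ioo 0 (π / 2) = Ioo 0 (π ^ 2) := by
  rw [continuous_sigmaFn.continuousOn.image_Ioo_of_strictMonoOn pi_div_two_pos.le
    strictMonoOn_sigmaFn, sigmaFn_zero, sigmaFn_pi_div_two]

theorem bijOn_sigmaFn : BijOn sigmaFn (Icc 0 (π / 2)) (Icc 0 (π ^ 2)) :=
  image_sigmaFn_Icc ▸ strictMonoOn_sigmaFn.injOn.bijOn_image

theorem leftInvOn_invFunOn_sigmaFn :
    LeftInvOn (Function.invFunOn sigmaFn (Icc 0 (π / 2))) sigmaFn (Icc 0 (π / 2)) :=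
  strictMonoOn_sigmaFn.injOn.leftInvOn_invFunOn

theorem continuousOn_invFunOn_sigmaFn :
    ContinuousOn (Function.invFunOn sigmaFn (Icc 0 (π / 2))) (Icc 0 (π ^ 2)) :=
  image_sigmaFn_Icc ▸ continuousOn_image_of_leftInvOn_of_isCompact isCompact_Icc
    continuous_sigmaFn.continuousOn leftInvOn_invFunOn_sigmaFn

theorem hasDerivAt_invFunOn_sigmaFn {r : ℝ} (hr : r ∈ Ioo 0 (π / 2)) :
    HasDerivAt (Function.invFunOn sigmaFn (Icc 0 (π / 2))) (4 * π * sin r ^ 2)⁻¹ (sigmaFn r) := by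
  have hsin : 0 < sin r := (sin_mapsTo_Ioo_zero_pi_div_two hr).1
  have hnhds : sigmaFn '' Icc 0 (π / 2) ∈ 𝓝 (sigmaFn r) := by
    have hσ : sigmaFn r ∈ Ioo 0 (π ^ 2) := image_sigmaFn_Ioo ▸ mem_image_of_mem sigmaFn hr
    rw [image_sigmaFn_Icc]
    exact Icc_mem_nhds hσ.1 hσ.2
  exact hasDerivAt_of_leftInvOn_of_isCompact isCompact_Icc continuous_sigmaFn.continuousOn
    leftInvOn_invFunOn_sigmaFn (Ioo_subset_Icc_self hr) hnhds (hasDerivAt_sigmaFn r) (by positivity)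

theorem hFn_pi_sq_sub_sigmaFn {r : ℝ} (hr : r ∈ Icc 0 (π / 2)) :
    hFn (π ^ 2 - sigmaFn r) = (4 * π) ^ (3 / 2 : ℝ) * sin r ^ 3 := by
  rw [hFn, sub_sub_cancel, leftInvOn_invFunOn_sigmaFn hr]

theorem hFn_zero : hFn 0 = (4 * π) ^ (3 / 2 : ℝ) := by
  simpa [sigmaFn_pi_div_two] using hFn_pi_sq_sub_sigmaFn (right_mem_Icc.2 pi_div_two_pos.le)

theorem hFn_pi_sq : hFn (π ^ 2) = 0 := by
  simpa [sigmaFn_zero] using hFn_pi_sq_sub_sigmaFn (left_mem_Icc.2 pi_div_two_pos.le)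

theorem continuousOn_hFn : ContinuousOn hFn (Icc 0 (π ^ 2)) := by
  have hreflect : MapsTo (fun s ↦ π ^ 2 - s) (Icc 0 (π ^ 2)) (Icc 0 (π ^ 2)) :=
    fun s hs ↦ ⟨sub_nonneg.2 hs.2, sub_le_self _ hs.1⟩
  have hinv := continuousOn_invFunOn_sigmaFn.comp (by fun_prop) hreflect
  exact ((continuous_sin.comp_continuousOn hinv).pow 3).const_mul _

theorem hFn_pi_sq_sub_sigmaFn_mem_Ioo {r : ℝ} (hr : r ∈ Ioo 0 (π / 2)) :
    hFn (π ^ 2 - sigmaFn r) ∈ Ioo 0 ((4 * π) ^ (3 / 2 : ℝ)) := by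
  obtain ⟨hsin_pos, hsin_lt⟩ := sin_mapsTo_Ioo_zero_pi_div_two hr
  rw [hFn_pi_sq_sub_sigmaFn (Ioo_subset_Icc_self hr)]
  exact ⟨by positivity,
    mul_lt_of_lt_one_right (by positivity) (pow_lt_one₀ hsin_pos.le hsin_lt three_ne_zero)⟩

theorem hasDerivAt_hFn_pi_sq_sub_sigmaFn {r : ℝ} (hr : r ∈ Ioo 0 (π / 2)) :
    HasDerivAt hFn (-(3 * √(4 * π) * cos r)) (π ^ 2 - sigmaFn r) := by
  have hsin : 0 < sin r := (sin_mapsTo_Ioo_zero_pi_div_two hr).1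
  have hinv : HasDerivAt (fun s ↦ Function.invFunOn sigmaFn (Icc 0 (π / 2)) (π ^ 2 - s))
      (-(4 * π * sin r ^ 2)⁻¹) (π ^ 2 - sigmaFn r) := by
    refine HasDerivAt.comp_const_sub (π ^ 2) _ ?_
    rw [sub_sub_cancel]
    exact hasDerivAt_invFunOn_sigmaFn hr
  refine ((hinv.sin.pow 3).const_mul ((4 * π) ^ (3 / 2 : ℝ))).congr_deriv ?_
  rw [sub_sub_cancel, leftInvOn_invFunOn_sigmaFn (Ioo_subset_Icc_self hr),
    rpow_three_halves_eq_mul_sqrt (by positivity)]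
  field_simp
  norm_num
  ring

theorem sqrt_sub_hFn_pi_sq_sub_sigmaFn {r : ℝ} (hr : r ∈ Icc 0 (π / 2)) :
    √(36 * π - 9 * hFn (π ^ 2 - sigmaFn r) ^ (2 / 3 : ℝ)) = 3 * √(4 * π) * cos r := by
  rw [hFn_pi_sq_sub_sigmaFn hr, ← sqrt_sub_rpow_two_thirds_sin_cube (by positivity) hr]
  ring_nf

/-- `σ` is a strictly increasing bijection from `[0, π/2]` onto `[0, π²]`, and
`h(s) = (4π)^{3/2} sin³(σ⁻¹(π² − s))` is differentiable on `(0, π²)` with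
`h'(s) = −(36π − 9 h(s)^{2/3})^{1/2}`, `h → (4π)^{3/2}` at `0`, `h → 0` at `π²`;
equivalently `h(π² − 2πr + π sin(2r)) = (4π)^{3/2} sin³(r)` for `r ∈ (0, π/2)`. -/
theorem stmt_11 :
    StrictMonoOn sigmaFn (Set.Icc 0 (π / 2)) ∧
    Set.BijOn sigmaFn (Set.Icc 0 (π / 2)) (Set.Icc 0 (π ^ 2)) ∧
    (∀ s ∈ Set.Ioo (0:ℝ) (π ^ 2),
      hFn s ∈ Set.Ioo (0:ℝ) ((4 * π) ^ (3/2 : ℝ)) ∧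
      HasDerivAt hFn (-Real.sqrt (36 * π - 9 * (hFn s) ^ (2/3 : ℝ))) s) ∧
    Filter.Tendsto hFn (nhdsWithin 0 (Set.Ioo (0:ℝ) (π ^ 2)))
      (nhds ((4 * π) ^ (3/2 : ℝ))) ∧
    Filter.Tendsto hFn (nhdsWithin (π ^ 2) (Set.Ioo (0:ℝ) (π ^ 2))) (nhds 0) ∧
    ∀ r ∈ Set.Ioo (0:ℝ) (π / 2),
      hFn (π ^ 2 - 2 * π * r + π * Real.sin (2 * r))
        = (4 * π) ^ (3/2 : ℝ) * (Real.sin r) ^ 3 := by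
  refine ⟨strictMonoOn_sigmaFn, bijOn_sigmaFn, fun s hs ↦ ?_, ?_, ?_, fun r hr ↦ ?_⟩
  · obtain ⟨r, hr, hrs⟩ : π ^ 2 - s ∈ sigmaFn '' Ioo 0 (π / 2) := by
      rw [image_sigmaFn_Ioo]
      exact ⟨sub_pos.2 hs.2, sub_lt_self _ hs.1⟩
    obtain rfl : s = π ^ 2 - sigmaFn r := by rw [hrs, sub_sub_cancel]
    refine ⟨hFn_pi_sq_sub_sigmaFn_mem_Ioo hr, ?_⟩
    rw [sqrt_sub_hFn_pi_sq_sub_sigmaFn (Ioo_subset_Icc_self hr)]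
    exact hasDerivAt_hFn_pi_sq_sub_sigmaFn hr
  · have hcont := continuousOn_hFn 0 (left_mem_Icc.2 (by positivity))
    simpa only [ContinuousWithinAt, hFn_zero] using hcont.mono Ioo_subset_Icc_self
  · have hcont := continuousOn_hFn (π ^ 2) (right_mem_Icc.2 (by positivity))
    simpa only [ContinuousWithinAt, hFn_pi_sq] using hcont.mono Ioo_subset_Icc_self
  · rw [← hFn_pi_sq_sub_sigmaFn (Ioo_subset_Icc_self hr), sigmaFn]
    ring_nf
end
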